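/- Bilaplacian of the scaled multiplier in dimension three: Let n = 3, M ≥ 1, R > 0. Then for every x with 0 < |x| < R, Δ²φ_R(x) = −1/R³, and for every x with |x| > R, Δ²φ_R(x) = 0. -/

import Mathlib

open MeasureTheory
open scoped BigOperators

noncomputable section

/-- The partial derivative `∂ₖ f` of a real-valued function. -/
noncomputable def pdR {n : ℕ} (f : EuclideanSpace ℝ (Fin n) → ℝ) (k : Fin n)
    (x : EuclideanSpace ℝ (Fin n)) : ℝ :=
  fderiv ℝ f x (EuclideanSpace.single k 1)

/-- The Laplacian `Δf = Σₖ ∂ₖ∂ₖ f` of a real-valued function. -/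
noncomputable def lap {n : ℕ} (f : EuclideanSpace ℝ (Fin n) → ℝ)
    (x : EuclideanSpace ℝ (Fin n)) : ℝ :=
  ∑ k, pdR (pdR f k) k x

/-- The derivative `φ₀'` of the basic radial multiplier. -/
noncomputable def gmult (n : ℕ) (M : ℝ) (r : ℝ) : ℝ :=
  if r ≤ 1 then M + r / (2 * n) - r ^ 3 / (2 * n * (n + 2))
  else M + 1 / (2 * n) - 1 / (2 * n * (n + 2) * r ^ (n - 1))

/-- The basic radial multiplier `φ₀(r) = ∫₀ʳ φ₀'(s) ds`. -/
noncomputable def phi0 (n : ℕ) (M : ℝ) (r : ℝ) : ℝ :=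
  ∫ s in (0:ℝ)..r, gmult n M s

/-- The scaled multiplier `φ_R(x) = R φ₀(|x|/R)`. -/
noncomputable def phiR (n : ℕ) (M R : ℝ) (x : EuclideanSpace ℝ (Fin n)) : ℝ :=
  R * phi0 n M (‖x‖ / R)

/-!
On a radial function `F(|x|)` of `ℝⁿ` the Laplacian acts, away from the origin, as
`F'' + (n - 1)/r · F'`. The pieces of `φ₀'` match at `r = 1`, so `φ_R` has radial derivative
`φ₀'(r/R)`, and the formula gives
* `Δφ_R = 1/(2R) + (n - 1)M/r - r²/(2nR³)` for `0 < r < R`,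
* `Δφ_R = (n - 1)(M + 1/(2n))/r` for `r > R`.

Both have the form `a + b/r + c r²`, whose Laplacian is `(3 - n)b/r³ + 2nc`. In dimension three
`1/r` is harmonic, so that only the term `2nc` survives.
-/

open Filter Topology

theorem hasFDerivAt_norm {E : Type*} [NormedAddCommGroup E] [InnerProductSpace ℝ E] {x : E}
    (hx : x ≠ 0) : HasFDerivAt (fun y : E => ‖y‖) (‖x‖⁻¹ • innerSL ℝ x) x := by
  have hx0 : ‖x‖ ≠ 0 := norm_ne_zero_iff.mpr hx
  have h := (hasStrictFDerivAt_norm_sq x).hasFDerivAt.sqrt (pow_ne_zero 2 hx0)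
  simp only [Real.sqrt_sq (norm_nonneg _)] at h
  refine h.congr_fderiv ?_
  ext v
  simp only [smul_apply, innerSL_apply_apply, smul_eq_mul, nsmul_eq_mul, Nat.cast_ofNat]
  field_simp

section Laplacian

variable {n : ℕ} {f g : EuclideanSpace ℝ (Fin n) → ℝ} {x : EuclideanSpace ℝ (Fin n)}

theorem dim_ne_zero_of_ne_zero (hx : x ≠ 0) : n ≠ 0 := by
  rintro rfl
  exact hx (Subsingleton.elim x 0)

theorem pdR_congr (h : f =ᶠ[𝓝 x] g) (k : Fin n) : pdR f k x = pdR g k x := by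
  rw [pdR, pdR, h.fderiv_eq]

theorem lap_congr (h : f =ᶠ[𝓝 x] g) : lap f x = lap g x :=
  Finset.sum_congr rfl fun k _ =>
    pdR_congr (h.eventuallyEq_nhds.mono fun _ hy => pdR_congr hy k) k

theorem pdR_comp_norm {F : ℝ → ℝ} {F' : ℝ} (hx : x ≠ 0) (hF : HasDerivAt F F' ‖x‖) (k : Fin n) :
    pdR (fun y => F ‖y‖) k x = F' / ‖x‖ * x k := by
  have h : HasFDerivAt (fun y => F ‖y‖) (F' • ‖x‖⁻¹ • innerSL ℝ x) x :=
    hF.comp_hasFDerivAt x (hasFDerivAt_norm hx)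
  rw [pdR, h.fderiv]
  simp only [smul_apply, coe_innerSL_apply, EuclideanSpace.inner_single_right,
    Real.ringHom_apply, one_mul, smul_eq_mul]
  ring

theorem pdR_comp_norm_mul_coord {G : ℝ → ℝ} {G' : ℝ} (hx : x ≠ 0) (hG : HasDerivAt G G' ‖x‖)
    (k : Fin n) : pdR (fun y => G ‖y‖ * y k) k x = G' / ‖x‖ * x k ^ 2 + G ‖x‖ := by
  have hnorm : HasFDerivAt (fun y => G ‖y‖) (G' • ‖x‖⁻¹ • innerSL ℝ x) x :=
    hG.comp_hasFDerivAt x (hasFDerivAt_norm hx)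
  have hcoord : HasFDerivAt (fun y : EuclideanSpace ℝ (Fin n) => y k)
      (EuclideanSpace.proj k : EuclideanSpace ℝ (Fin n) →L[ℝ] ℝ) x :=
    (EuclideanSpace.proj k : EuclideanSpace ℝ (Fin n) →L[ℝ] ℝ).hasFDerivAt
  rw [pdR, (hnorm.fun_mul hcoord).fderiv]
  simp only [add_apply, smul_apply, PiLp.proj_apply, PiLp.single_eq_same, smul_eq_mul, mul_one,
    coe_innerSL_apply, EuclideanSpace.inner_single_right, Real.ringHom_apply, one_mul]
  ring

theorem lap_comp_norm {F F' : ℝ → ℝ} {F'' : ℝ} (hx : x ≠ 0)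
    (hF : ∀ᶠ r in 𝓝 ‖x‖, HasDerivAt F (F' r) r) (hF' : HasDerivAt F' F'' ‖x‖) :
    lap (fun y => F ‖y‖) x = F'' + (n - 1) / ‖x‖ * F' ‖x‖ := by
  have hx0 : ‖x‖ ≠ 0 := norm_ne_zero_iff.mpr hx
  have hgrad (k : Fin n) :
      pdR (fun y => F ‖y‖) k =ᶠ[𝓝 x] fun y => F' ‖y‖ / ‖y‖ * y k := by
    filter_upwards [continuous_norm.continuousAt.eventually hF, eventually_ne_nhds hx]
      with y hFy hy using pdR_comp_norm hy hFy k
  have hG : HasDerivAt (fun r => F' r / r) ((F'' * ‖x‖ - F' ‖x‖) / ‖x‖ ^ 2) ‖x‖ := by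
    simpa only [mul_one] using hF'.fun_div (hasDerivAt_id' ‖x‖) hx0
  calc lap (fun y => F ‖y‖) x
      = ∑ k, ((F'' * ‖x‖ - F' ‖x‖) / ‖x‖ ^ 2 / ‖x‖ * x k ^ 2 + F' ‖x‖ / ‖x‖) :=
        Finset.sum_congr rfl fun k _ =>
          (pdR_congr (hgrad k) k).trans (pdR_comp_norm_mul_coord hx hG k)
    _ = (F'' * ‖x‖ - F' ‖x‖) / ‖x‖ ^ 2 / ‖x‖ * ‖x‖ ^ 2 + n * (F' ‖x‖ / ‖x‖) := by
        rw [Finset.sum_add_distrib, ← Finset.mul_sum, ← EuclideanSpace.real_norm_sq_eq,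
          Finset.sum_const, Finset.card_univ, Fintype.card_fin, nsmul_eq_mul]
    _ = F'' + (n - 1) / ‖x‖ * F' ‖x‖ := by
        field_simp
        ring

theorem lap_const_add_div_norm_add_mul_norm_sq (a b c : ℝ) (hx : x ≠ 0) :
    lap (fun y => a + b / ‖y‖ + c * ‖y‖ ^ 2) x = (3 - n) * b / ‖x‖ ^ 3 + 2 * n * c := by
  have hx0 : ‖x‖ ≠ 0 := norm_ne_zero_iff.mpr hx
  have hF : ∀ᶠ r in 𝓝 ‖x‖,
      HasDerivAt (fun r => a + b / r + c * r ^ 2) (-b / r ^ 2 + 2 * c * r) r := by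
    filter_upwards [eventually_ne_nhds hx0] with r hr
    refine (((hasDerivAt_const r a).fun_add
      ((hasDerivAt_const r b).fun_div (hasDerivAt_id' r) hr)).fun_add
      ((hasDerivAt_pow 2 r).const_mul c)).congr_deriv ?_
    simp only [Nat.add_one_sub_one, Nat.cast_ofNat, pow_one]
    ring
  have hF' : HasDerivAt (fun r => -b / r ^ 2 + 2 * c * r) (2 * b / ‖x‖ ^ 3 + 2 * c) ‖x‖ := by
    refine (((hasDerivAt_const ‖x‖ (-b)).fun_div (hasDerivAt_pow 2 ‖x‖)
      (pow_ne_zero 2 hx0)).fun_add ((hasDerivAt_id' ‖x‖).const_mul (2 * c))).congr_deriv ?_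
    field_simp
    simp only [Nat.add_one_sub_one, Nat.cast_ofNat, pow_one]
    ring
  rw [lap_comp_norm hx hF hF']
  field_simp
  ring

end Laplacian

section Profile

variable (n : ℕ) (M : ℝ)

theorem continuous_gmult : Continuous (gmult n M) := by
  -- Replacing `r` by `max r 1` in the outer branch removes its singularity at `0`.
  have hgmult : gmult n M = fun r => if r ≤ 1
      then M + r / (2 * n) - r ^ 3 / (2 * n * (n + 2))
      else M + 1 / (2 * n) - 1 / (2 * n * (n + 2)) * (max r 1 ^ (n - 1))⁻¹ := by
    funext r
    unfold gmult
    split_ifs with hr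
    · rfl
    · rw [max_eq_left (not_le.mp hr).le, ← div_eq_mul_inv, div_div]
  have hmax (r : ℝ) : max r 1 ^ (n - 1) ≠ 0 :=
    pow_ne_zero _ (lt_max_of_lt_right one_pos).ne'
  rw [hgmult]
  refine Continuous.if_le (by fun_prop) (by fun_prop (disch := exact hmax _)) continuous_id
    continuous_const ?_
  rintro r rfl
  simp

variable {n M} {s : ℝ}

theorem gmult_of_le_one (hs : s ≤ 1) :
    gmult n M s = M + s / (2 * n) - s ^ 3 / (2 * n * (n + 2)) :=
  if_pos hs

theorem gmult_of_one_lt (hs : 1 < s) :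
    gmult n M s = M + 1 / (2 * n) - 1 / (2 * n * (n + 2) * s ^ (n - 1)) :=
  if_neg hs.not_ge

theorem hasDerivAt_gmult_of_lt_one (hs : s < 1) :
    HasDerivAt (gmult n M) (1 / (2 * n) - 3 * s ^ 2 / (2 * n * (n + 2))) s := by
  have hpoly : HasDerivAt (fun r : ℝ => M + r / (2 * n) - r ^ 3 / (2 * n * (n + 2)))
      (1 / (2 * n) - 3 * s ^ 2 / (2 * n * (n + 2))) s :=
    (((hasDerivAt_id' s).div_const _).const_add M).fun_sub ((hasDerivAt_pow 3 s).div_const _)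
  exact hpoly.congr_of_eventuallyEq
    ((eventually_lt_nhds hs).mono fun r hr => gmult_of_le_one hr.le)

theorem hasDerivAt_gmult_of_one_lt (hn : n ≠ 0) (hs : 1 < s) :
    HasDerivAt (gmult n M) ((n - 1) / (2 * n * (n + 2) * s ^ n)) s := by
  obtain ⟨m, rfl⟩ := Nat.exists_eq_add_one_of_ne_zero hn
  have hs0 : s ≠ 0 := (one_pos.trans hs).ne'
  have hpow : HasDerivAt (fun r : ℝ => (r ^ m)⁻¹) (-m * (s ^ (m + 1))⁻¹) s := by
    have h := hasDerivAt_zpow (-m) s (Or.inl hs0)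
    rw [← neg_add', ← Nat.cast_add_one] at h
    simpa only [zpow_neg, zpow_natCast, Int.cast_neg, Int.cast_natCast] using h
  have houter : gmult (m + 1) M =ᶠ[𝓝 s] fun r => M + 1 / (2 * ↑(m + 1))
      - 1 / (2 * ↑(m + 1) * (↑(m + 1) + 2)) * (r ^ m)⁻¹ := by
    filter_upwards [eventually_gt_nhds hs] with r hr
    rw [gmult_of_one_lt hr, Nat.add_sub_cancel, ← div_eq_mul_inv, div_div]
  refine (((hpow.const_mul _).const_sub _).congr_of_eventuallyEq houter).congr_deriv ?_
  push_cast
  field_simp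
  ring

theorem hasDerivAt_phi0 : HasDerivAt (phi0 n M) (gmult n M s) s :=
  ((continuous_gmult n M).integral_hasStrictDerivAt 0 s).hasDerivAt

theorem hasDerivAt_mul_phi0_div {R : ℝ} (hR : R ≠ 0) (r : ℝ) :
    HasDerivAt (fun r => R * phi0 n M (r / R)) (gmult n M (r / R)) r := by
  refine ((hasDerivAt_phi0.comp r ((hasDerivAt_id' r).div_const R)).const_mul R).congr_deriv ?_
  field_simp

end Profile

section Multiplier

variable {n : ℕ} {M R : ℝ} {x : EuclideanSpace ℝ (Fin n)}

theorem lap_phiR {g' : ℝ} (hR : R ≠ 0) (hx : x ≠ 0) (hg : HasDerivAt (gmult n M) g' (‖x‖ / R)) :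
    lap (phiR n M R) x = g' / R + (n - 1) / ‖x‖ * gmult n M (‖x‖ / R) := by
  have hg' : HasDerivAt (fun r => gmult n M (r / R)) (g' / R) ‖x‖ := by
    rw [← mul_one_div]
    exact hg.comp ‖x‖ ((hasDerivAt_id' ‖x‖).div_const R)
  exact lap_comp_norm hx (Eventually.of_forall (hasDerivAt_mul_phi0_div hR)) hg'

theorem lap_phiR_of_norm_lt (hx : x ≠ 0) (hxR : ‖x‖ < R) :
    lap (phiR n M R) x
      = 1 / (2 * R) + (n - 1) * M / ‖x‖ + -(1 / (2 * n * R ^ 3)) * ‖x‖ ^ 2 := by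
  have hn : (n : ℝ) ≠ 0 := Nat.cast_ne_zero.mpr (dim_ne_zero_of_ne_zero hx)
  have hx0 : ‖x‖ ≠ 0 := norm_ne_zero_iff.mpr hx
  have hR : 0 < R := (norm_nonneg x).trans_lt hxR
  have hs : ‖x‖ / R < 1 := (div_lt_one hR).mpr hxR
  rw [lap_phiR hR.ne' hx (hasDerivAt_gmult_of_lt_one hs), gmult_of_le_one hs.le]
  field_simp
  ring

theorem lap_phiR_of_lt_norm (hR : 0 < R) (hxR : R < ‖x‖) :
    lap (phiR n M R) x = (n - 1) * (M + 1 / (2 * n)) / ‖x‖ := by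
  have hx0 : 0 < ‖x‖ := hR.trans hxR
  have hx : x ≠ 0 := norm_pos_iff.mp hx0
  have hn := dim_ne_zero_of_ne_zero hx
  have hs : 1 < ‖x‖ / R := (one_lt_div hR).mpr hxR
  rw [lap_phiR hR.ne' hx (hasDerivAt_gmult_of_one_lt hn hs), gmult_of_one_lt hs]
  obtain ⟨m, rfl⟩ := Nat.exists_eq_add_one_of_ne_zero hn
  simp only [Nat.add_sub_cancel, Nat.cast_add, Nat.cast_one, pow_succ]
  field_simp
  ring

theorem lap_lap_phiR_of_norm_lt (hx : x ≠ 0) (hxR : ‖x‖ < R) :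
    lap (lap (phiR n M R)) x = (n - 1) * (3 - n) * M / ‖x‖ ^ 3 - 1 / R ^ 3 := by
  have hn : (n : ℝ) ≠ 0 := Nat.cast_ne_zero.mpr (dim_ne_zero_of_ne_zero hx)
  have hlap : lap (phiR n M R) =ᶠ[𝓝 x] fun y =>
      1 / (2 * R) + (n - 1) * M / ‖y‖ + -(1 / (2 * n * R ^ 3)) * ‖y‖ ^ 2 := by
    filter_upwards [eventually_ne_nhds hx, continuous_norm.continuousAt.eventually_lt_const hxR]
      with y hy hyR using lap_phiR_of_norm_lt hy hyR
  rw [lap_congr hlap, lap_const_add_div_norm_add_mul_norm_sq _ _ _ hx]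
  field_simp
  ring

theorem lap_lap_phiR_of_lt_norm (hR : 0 < R) (hxR : R < ‖x‖) :
    lap (lap (phiR n M R)) x = (n - 1) * (3 - n) * (M + 1 / (2 * n)) / ‖x‖ ^ 3 := by
  have hx : x ≠ 0 := norm_pos_iff.mp (hR.trans hxR)
  have hlap : lap (phiR n M R) =ᶠ[𝓝 x] fun y =>
      0 + (n - 1) * (M + 1 / (2 * n)) / ‖y‖ + 0 * ‖y‖ ^ 2 := by
    filter_upwards [continuous_norm.continuousAt.eventually_const_lt hxR] with y hyR
    rw [lap_phiR_of_lt_norm hR hyR, zero_add, zero_mul, add_zero]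
  rw [lap_congr hlap, lap_const_add_div_norm_add_mul_norm_sq _ _ _ hx]
  ring

end Multiplier

theorem bilap_phiR_dim_three_general (n : ℕ) (M R : ℝ) (hR : 0 < R) :
    (∀ x : EuclideanSpace ℝ (Fin n), 0 < ‖x‖ → ‖x‖ < R →
      lap (lap (phiR n M R)) x = (n - 1) * (3 - n) * M / ‖x‖ ^ 3 - 1 / R ^ 3)
    ∧ (∀ x : EuclideanSpace ℝ (Fin n), R < ‖x‖ →
      lap (lap (phiR n M R)) x = (n - 1) * (3 - n) * (M + 1 / (2 * n)) / ‖x‖ ^ 3) :=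
  ⟨fun _ hx hxR => lap_lap_phiR_of_norm_lt (norm_pos_iff.mp hx) hxR,
    fun _ hxR => lap_lap_phiR_of_lt_norm hR hxR⟩

/-- Bilaplacian of the scaled multiplier in dimension three:
`Δ²φ_R(x) = -1/R³` for `0 < |x| < R` and `Δ²φ_R(x) = 0` for `|x| > R`. -/
theorem bilap_phiR_dim_three (M : ℝ) (hM : 1 ≤ M) (R : ℝ) (hR : 0 < R) :
    (∀ x : EuclideanSpace ℝ (Fin 3), 0 < ‖x‖ → ‖x‖ < R →
      lap (lap (phiR 3 M R)) x = -(1 / R ^ 3))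
    ∧ (∀ x : EuclideanSpace ℝ (Fin 3), R < ‖x‖ →
      lap (lap (phiR 3 M R)) x = 0) := by
  simpa using bilap_phiR_dim_three_general 3 M R hR
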